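/- arXiv:math/0306378 — 4 statements merged into one kernel-verified Lean document; each statement's English description precedes it below -/
import Mathlib

section
/- Uniqueness of reductions: Let C' and C'' be filtered complexes over a field, with finite-dimensional underlying spaces and filtrations of the same length, and suppose both are reduced in the sense that their differentials map the i-th filtration level into the (i−1)-st for every i (equivalently, all induced differentials on their filtered quotients vanish). Then every filtered chain homotopy equivalence i : C' → C'' is an isomorphism of filtered complexes: i is a bijective chain map with i(C'_p) = C''_p for all p. In particular, any two reductions of a given filtered complex are isomorphic as filtered complexes. -/
/-!
If `d` lowers the filtration level by one and the homotopy `H` preserves it, then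
`d ∘ H + H ∘ d` lowers it by one. Hence both composites `j ∘ f` and `f ∘ j` differ from the
identity by an operator that lowers the filtration level, and the filtrations start at `0`.
If `f x = 0`, then `x = (d ∘ H₁ + H₁ ∘ d) x` lies in every filtration level, so `x = 0`.
If `y ∈ D_p`, then `y = f (j y) + (d ∘ H₂ + H₂ ∘ d) y` with `j y ∈ C_p` and the last term in
`D_{p-1}`, so `D_p ⊆ f(C_p)` by induction on `p`; the level `p = m` gives surjectivity.
-/

open LinearMap

/-- `(gr, d)` is a ℤ-graded chain complex structure on `M`: the grading is an internal
direct sum decomposition, the differential has degree `-1`, and `d ∘ d = 0`. -/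
abbrev IsCx {F M : Type} [Field F] [AddCommGroup M] [Module F M]
    (gr : ℤ → Submodule F M) (d : M →ₗ[F] M) : Prop :=
  DirectSum.IsInternal gr ∧ (∀ i, (gr i).map d ≤ gr (i - 1)) ∧ d ∘ₗ d = 0

/-- `f` is a chain map from `(grC, dC)` to `(grD, dD)`: homogeneous of degree `0` and
commuting with the differentials. -/
abbrev IsChainMap {F M N : Type} [Field F] [AddCommGroup M] [Module F M]
    [AddCommGroup N] [Module F N]
    (grC : ℤ → Submodule F M) (dC : M →ₗ[F] M)
    (grD : ℤ → Submodule F N) (dD : N →ₗ[F] N) (f : M →ₗ[F] N) : Prop :=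
  (∀ i, (grC i).map f ≤ grD i) ∧ f ∘ₗ dC = dD ∘ₗ f

/-- `H` is a chain homotopy from `f` to `g`: homogeneous of degree `+1` with
`f - g = dD ∘ H + H ∘ dC`. -/
abbrev IsHomotopy {F M N : Type} [Field F] [AddCommGroup M] [Module F M]
    [AddCommGroup N] [Module F N]
    (grC : ℤ → Submodule F M) (dC : M →ₗ[F] M)
    (grD : ℤ → Submodule F N) (dD : N →ₗ[F] N) (f g H : M →ₗ[F] N) : Prop :=
  (∀ i, (grC i).map H ≤ grD (i + 1)) ∧ f - g = dD ∘ₗ H + H ∘ₗ dC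

/-- `f` is a chain homotopy equivalence. -/
abbrev IsHtpyEquiv {F M N : Type} [Field F] [AddCommGroup M] [Module F M]
    [AddCommGroup N] [Module F N]
    (grC : ℤ → Submodule F M) (dC : M →ₗ[F] M)
    (grD : ℤ → Submodule F N) (dD : N →ₗ[F] N) (f : M →ₗ[F] N) : Prop :=
  IsChainMap grC dC grD dD f ∧
  ∃ (j : N →ₗ[F] M) (H₁ : M →ₗ[F] M) (H₂ : N →ₗ[F] N),
    IsChainMap grD dD grC dC j ∧
    IsHomotopy grC dC grC dC LinearMap.id (j ∘ₗ f) H₁ ∧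
    IsHomotopy grD dD grD dD LinearMap.id (f ∘ₗ j) H₂

/-- `filt` is a finite increasing filtration `0 = C_0 ⊆ C_1 ⊆ ⋯ ⊆ C_m = C` by
subcomplexes.  (Indices `≥ m` give the whole complex.) -/
structure IsFilt {F M : Type} [Field F] [AddCommGroup M] [Module F M]
    (d : M →ₗ[F] M) (m : ℕ) (filt : ℕ → Submodule F M) : Prop where
  bot : filt 0 = ⊥
  top : filt m = ⊤
  mono : Monotone filt
  subcx : ∀ p, (filt p).map d ≤ filt p

/-- `f` is a filtered chain homotopy equivalence: a filtration-preserving chain map with a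
filtration-preserving homotopy inverse and filtration-preserving chain homotopies. -/
abbrev IsFiltHtpyEquiv {F M N : Type} [Field F] [AddCommGroup M] [Module F M]
    [AddCommGroup N] [Module F N]
    (grC : ℤ → Submodule F M) (dC : M →ₗ[F] M) (filtC : ℕ → Submodule F M)
    (grD : ℤ → Submodule F N) (dD : N →ₗ[F] N) (filtD : ℕ → Submodule F N)
    (f : M →ₗ[F] N) : Prop :=
  IsChainMap grC dC grD dD f ∧ (∀ p, (filtC p).map f ≤ filtD p) ∧
  ∃ (j : N →ₗ[F] M) (H₁ : M →ₗ[F] M) (H₂ : N →ₗ[F] N),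
    IsChainMap grD dD grC dC j ∧ (∀ p, (filtD p).map j ≤ filtC p) ∧
    IsHomotopy grC dC grC dC LinearMap.id (j ∘ₗ f) H₁ ∧ (∀ p, (filtC p).map H₁ ≤ filtC p) ∧
    IsHomotopy grD dD grD dD LinearMap.id (f ∘ₗ j) H₂ ∧ (∀ p, (filtD p).map H₂ ≤ filtD p)

/-- The submodule of the `p`-th filtration level given by the `(p-1)`-st level. -/
def fSub {F M : Type} [Field F] [AddCommGroup M] [Module F M]
    (filt : ℕ → Submodule F M) (p : ℕ) : Submodule F ↥(filt p) :=
  (filt (p - 1)).comap (filt p).subtype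

/-- The `p`-th filtered quotient `C^p = C_p / C_{p-1}`. -/
abbrev FQuot {F M : Type} [Field F] [AddCommGroup M] [Module F M]
    (filt : ℕ → Submodule F M) (p : ℕ) :=
  ↥(filt p) ⧸ fSub filt p

/-- The map induced on the `p`-th filtered quotients by a filtration-preserving map. -/
def fQuot {F M N : Type} [Field F] [AddCommGroup M] [Module F M]
    [AddCommGroup N] [Module F N]
    (f : M →ₗ[F] N) (filtM : ℕ → Submodule F M) (filtN : ℕ → Submodule F N)
    (hf : ∀ p, (filtM p).map f ≤ filtN p) (p : ℕ) :
    FQuot filtM p →ₗ[F] FQuot filtN p :=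
  Submodule.mapQ (fSub filtM p) (fSub filtN p)
    ((f.domRestrict (filtM p)).codRestrict (filtN p) (fun x => hf p ⟨(x : M), x.2, rfl⟩))
    (by
      intro x hx
      have h : f (x : M) ∈ filtN (p - 1) := hf (p - 1) ⟨(x : M), hx, rfl⟩
      exact h)

/-- The homology of a differential module `(V, e)`: `ker e / im e`. -/
abbrev Hgy {F V : Type} [Field F] [AddCommGroup V] [Module F V] (e : V →ₗ[F] V) :=
  ↥(LinearMap.ker e) ⧸ (LinearMap.range e).comap (LinearMap.ker e).subtype

/-- The grading induced on the filtered quotient `C^p` by a grading of `C`. -/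
def qGr {F M : Type} [Field F] [AddCommGroup M] [Module F M]
    (gr : ℤ → Submodule F M) (filt : ℕ → Submodule F M) (p : ℕ) (i : ℤ) :
    Submodule F (FQuot filt p) :=
  ((gr i).comap (filt p).subtype).map (fSub filt p).mkQ

/-- The grading induced on homology by a grading of `V`. -/
def hGr {F V : Type} [Field F] [AddCommGroup V] [Module F V]
    (grV : ℤ → Submodule F V) (e : V →ₗ[F] V) (i : ℤ) : Submodule F (Hgy e) :=
  ((grV i).comap (LinearMap.ker e).subtype).map
    ((LinearMap.range e).comap (LinearMap.ker e).subtype).mkQ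

/-- In a reduced filtered complex, the difference between the identity and a map homotopic to
it through a filtration-preserving homotopy lowers the filtration level by one. -/
lemma sub_mem_of_reduced {F M : Type} [Field F] [AddCommGroup M] [Module F M]
    {d g H : M →ₗ[F] M} {filt : ℕ → Submodule F M}
    (hred : ∀ p, (filt p).map d ≤ filt (p - 1)) (hH : ∀ p, (filt p).map H ≤ filt p)
    (h : LinearMap.id - g = d ∘ₗ H + H ∘ₗ d) {p : ℕ} {x : M} (hx : x ∈ filt p) :
    x - g x ∈ filt (p - 1) := by
  have e : x - g x = d (H x) + H (d x) := LinearMap.congr_fun h x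
  rw [e]
  exact add_mem (hred p ⟨_, hH p ⟨x, hx, rfl⟩, rfl⟩) (hH (p - 1) ⟨_, hred p ⟨x, hx, rfl⟩, rfl⟩)

/-- **Uniqueness of reductions.**  If `C'` and `C''` are reduced filtered complexes over a
field (finite-dimensional, filtrations of the same length `m`, differentials dropping the
filtration level by one), then any filtered chain homotopy equivalence `f : C' → C''` is an
isomorphism of filtered complexes: `f` is bijective and `f(C'_p) = C''_p` for all `p`. -/
theorem stmt_2 {F M N : Type} [Field F] [AddCommGroup M] [Module F M]
    [AddCommGroup N] [Module F N]
    [FiniteDimensional F M] [FiniteDimensional F N]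
    (grC : ℤ → Submodule F M) (dC : M →ₗ[F] M) (hC : IsCx grC dC)
    (grD : ℤ → Submodule F N) (dD : N →ₗ[F] N) (hD : IsCx grD dD)
    (m : ℕ) (filtC : ℕ → Submodule F M) (hFC : IsFilt dC m filtC)
    (filtD : ℕ → Submodule F N) (hFD : IsFilt dD m filtD)
    (hredC : ∀ p, (filtC p).map dC ≤ filtC (p - 1))
    (hredD : ∀ p, (filtD p).map dD ≤ filtD (p - 1))
    (f : M →ₗ[F] N) (hf : IsFiltHtpyEquiv grC dC filtC grD dD filtD f) :
    Function.Bijective f ∧ ∀ p, (filtC p).map f = filtD p := by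
  obtain ⟨-, hfp, j, H₁, H₂, -, hjp, ⟨-, e₁⟩, hH₁, ⟨-, e₂⟩, hH₂⟩ := hf
  have hinj : ∀ p, ∀ x ∈ filtC p, f x = 0 → x = 0 := by
    intro p
    induction p with
    | zero =>
      intro x hx _
      simpa [hFC.bot] using hx
    | succ p ih =>
      intro x hx h0
      have h := sub_mem_of_reduced hredC hH₁ e₁ hx
      exact ih x (by simpa [h0] using h) h0
  have hle : ∀ p, filtD p ≤ (filtC p).map f := by
    intro p
    induction p with
    | zero => simp [hFD.bot]
    | succ p ih =>
      intro y hy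
      have h : y - f (j y) ∈ filtD p := sub_mem_of_reduced hredD hH₂ e₂ hy
      have h' := Submodule.map_mono (hFC.mono p.le_succ) (ih h)
      rw [← sub_add_cancel y (f (j y))]
      exact add_mem h' ⟨_, hjp _ ⟨y, hy, rfl⟩, rfl⟩
  refine ⟨⟨?_, fun y => ?_⟩, fun p => le_antisymm (hfp p) (hle p)⟩
  · rw [injective_iff_map_eq_zero]
    exact fun x => hinj m x (by simp [hFC.top])
  · obtain ⟨x, -, hx⟩ := hle m (show y ∈ filtD m by simp [hFD.top])
    exact ⟨x, hx⟩
end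

section
/- Genericity of areas (core of the isolation lemma): Fix m ≥ 1 and a finite family (n_1, c_1), …, (n_N, c_N) where each n_j ∈ ℤ^m is a nonzero integer vector and c_j ∈ ℝ. Then there exists a point a ∈ ℝ^m with all coordinates strictly positive such that |n_j · a + c_j| > 2 for every j = 1, …, N. Equivalently, the open positive orthant of ℝ^m is not contained in the union of the slabs {a ∈ ℝ^m : |n_j · a + c_j| ≤ 2}, j = 1, …, N. -/
/-!
The slabs are neighborhoods of hyperplanes of bounded width, so a ray from the origin leaves all of
them as soon as its direction `v` is orthogonal to none of the normals `n j`. Such a direction can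
be found on the moment curve `v = (1, s, s², …)`: here `n j · v` is a nonzero polynomial in `s`, so
it does not vanish for large `s > 0` (`exists_pos_forall_dot_ne_zero`). Then `a = t • v` works for
all large `t > 0`.
-/

theorem exists_pos_forall_dot_ne_zero {m N : ℕ} (n : Fin N → Fin m → ℤ) (hn : ∀ j, n j ≠ 0) :
    ∃ v : Fin m → ℝ, (∀ k, 0 < v k) ∧ ∀ j, ∑ k, (n j k : ℝ) * v k ≠ 0 := by
  -- The dot product of `n j` with `(1, s, s², …)`, as a polynomial in `s`.
  let P : Fin N → Polynomial ℝ := fun j => ∑ k, Polynomial.C (n j k : ℝ) * Polynomial.X ^ (k : ℕ)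
  have hP : ∀ j, P j ≠ 0 := by
    intro j h
    refine hn j (funext fun i => ?_)
    have hi : (P j).coeff i = n j i := by
      simp [P, Polynomial.coeff_X_pow, Fin.val_inj]
    rw [h, Polynomial.coeff_zero] at hi
    exact_mod_cast hi.symm
  have hroots : ∀ᶠ s : ℝ in Filter.atTop, ∀ j, ¬ (P j).IsRoot s :=
    Filter.eventually_all.2 fun j => (P j).eventually_atTop_not_isRoot (hP j)
  obtain ⟨s, hs, hs0⟩ := (hroots.and (Filter.eventually_gt_atTop 0)).exists
  refine ⟨fun k => s ^ (k : ℕ), fun k => pow_pos hs0 _, fun j h => hs j ?_⟩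
  simpa [P, Polynomial.IsRoot.def, Polynomial.eval_finsetSum] using h

/-- **Genericity of areas (core of the isolation lemma).**  Fix `m ≥ 1` and a finite
family `(n_1, c_1), …, (n_N, c_N)` where each `n_j ∈ ℤ^m` is a nonzero integer vector
and `c_j ∈ ℝ`.  Then there exists a point `a` in the open positive orthant of `ℝ^m`
with `|n_j · a + c_j| > 2` for every `j`; i.e. the open positive orthant is not
contained in the union of the width-two slabs `{a : |n_j · a + c_j| ≤ 2}`. -/
theorem stmt_5 (m N : ℕ) (hm : 1 ≤ m)
    (n : Fin N → Fin m → ℤ) (c : Fin N → ℝ)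
    (hn : ∀ j, n j ≠ 0) :
    ∃ a : Fin m → ℝ, (∀ k, 0 < a k) ∧
      ∀ j, 2 < |(∑ k, (n j k : ℝ) * a k) + c j| := by
  obtain ⟨v, hv, hne⟩ := exists_pos_forall_dot_ne_zero n hn
  have hfar : ∀ᶠ t : ℝ in Filter.atTop, ∀ j, 2 + |c j| < t * |∑ k, (n j k : ℝ) * v k| :=
    Filter.eventually_all.2 fun j =>
      (Filter.tendsto_id.atTop_mul_const (abs_pos.2 (hne j))).eventually_gt_atTop _
  obtain ⟨t, ht, ht0⟩ := (hfar.and (Filter.eventually_gt_atTop 0)).exists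
  refine ⟨fun k => t * v k, fun k => mul_pos ht0 (hv k), fun j => ?_⟩
  have hscale : ∑ k, (n j k : ℝ) * (t * v k) = t * ∑ k, (n j k : ℝ) * v k := by
    rw [Finset.mul_sum]
    exact Finset.sum_congr rfl fun k _ => by ring
  have htri := abs_sub_abs_le_abs_sub (t * ∑ k, (n j k : ℝ) * v k) (-c j)
  rw [abs_mul, abs_of_pos ht0, abs_neg, sub_neg_eq_add] at htri
  rw [hscale]
  linarith [ht j]
end

section
/- Let F be a field and let V = ⊕_{i∈ℤ} V_i and W = ⊕_{i∈ℤ} W_i be ℤ-graded F-vector spaces, with W bounded below (there is N ∈ ℤ with W_i = 0 for all i < N). Let p : V → W be a homogeneous linear map of degree 0 and q : V → W a homogeneous linear map of degree −d for some integer d ≥ 1, and assume ker p ⊆ ker q. Then: (1) there is an automorphism g of W of the form g = id_W + r with r homogeneous of degree −d such that p + q = g ∘ p; (2) consequently ker(p + q) = ker p and the cokernel of p + q is isomorphic to the cokernel of p. -/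
/-!
Since `ker p ≤ ker q` over a field, `q` factors as `s ∘ p` for some linear `s : W → W`.
Composing `s` on each graded piece `grW i` with a projection onto `grW (i - e)` gives a homogeneous `r` with `r ∘ p = q` still,
because `q` itself has degree `-e` (`exists_homogeneous_factor`). As `W` is bounded below and `r`
strictly lowers degrees, `r` is locally nilpotent (`exists_pow_apply_eq_zero`), so `id + r` is
bijective: the geometric series for its inverse is finite on every vector
(`bijective_id_add_of_locally_nilpotent`). The kernel and cokernel claims follow from
`p + q = (id + r) ∘ p`.
-/

theorem bijective_id_add_of_locally_nilpotent {F W : Type} [Field F] [AddCommGroup W] [Module F W]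
    (r : W →ₗ[F] W) (h : ∀ w, ∃ n : ℕ, (r ^ n) w = 0) :
    Function.Bijective (LinearMap.id + r : W →ₗ[F] W) := by
  constructor
  · rw [← LinearMap.ker_eq_bot, LinearMap.ker_eq_bot']
    intro w hw
    have hrw : r w = -w := by
      rw [LinearMap.add_apply, LinearMap.id_apply] at hw
      exact (neg_eq_of_add_eq_zero_right hw).symm
    obtain ⟨n, hn⟩ := h w
    induction n with
    | zero => simpa using hn
    | succ n ih =>
      apply ih
      rw [pow_succ, Module.End.mul_apply, hrw, map_neg, neg_eq_zero] at hn
      exact hn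
  · have key : ∀ (n : ℕ) (w : W), (r ^ n) w = 0 →
        w ∈ LinearMap.range (LinearMap.id + r : W →ₗ[F] W) := by
      intro n
      induction n with
      | zero =>
        intro w hw
        have : w = 0 := by simpa using hw
        rw [this]
        exact zero_mem _
      | succ n ih =>
        intro w hw
        -- `w = (id + r) w - r w`, and `r w` is killed by a smaller power of `r`.
        have h1 := ih (r w) (by rwa [pow_succ, Module.End.mul_apply] at hw)
        have h2 : w = (LinearMap.id + r : W →ₗ[F] W) w - r w := by simp
        rw [h2]
        exact sub_mem (LinearMap.mem_range_self _ _) h1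
    intro w
    obtain ⟨n, hn⟩ := h w
    exact key n w hn

/-- An endomorphism that strictly lowers the degree of a grading bounded below is locally nilpotent.
No uniform bound on `n` exists in general, since the grading may be unbounded above. -/
theorem exists_pow_apply_eq_zero {F W : Type} [Field F] [AddCommGroup W] [Module F W]
    (grW : ℤ → Submodule F W) (hW : ⨆ i, grW i = ⊤) (N₀ : ℤ) (hbdd : ∀ i, i < N₀ → grW i = ⊥)
    (e : ℤ) (he : 1 ≤ e) (r : W →ₗ[F] W) (hr : ∀ i, (grW i).map r ≤ grW (i - e)) (w : W) :
    ∃ n : ℕ, (r ^ n) w = 0 := by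
  have key : ∀ (k : ℕ) (i : ℤ), i < N₀ + k → ∀ w ∈ grW i, ∃ n : ℕ, (r ^ n) w = 0 := by
    intro k
    induction k with
    | zero =>
      intro i hi w hw
      rw [hbdd i (by simpa using hi), Submodule.mem_bot] at hw
      exact ⟨0, by simpa using hw⟩
    | succ k ih =>
      intro i hi w hw
      obtain ⟨n, hn⟩ := ih (i - e) (by push_cast at hi; omega) (r w)
        (hr i (Submodule.mem_map_of_mem hw))
      exact ⟨n + 1, by rwa [pow_succ, Module.End.mul_apply]⟩
  -- The vectors killed by a power of `r` form a submodule, the generalized eigenspace at `0`.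
  have hle : ⨆ i, grW i ≤ Module.End.maxGenEigenspace r 0 := by
    refine iSup_le fun i w hw => ?_
    rw [Module.End.mem_maxGenEigenspace]
    simpa using key (i - N₀ + 1).toNat i (by omega) w hw
  have hw := hle (hW ▸ Submodule.mem_top : w ∈ ⨆ i, grW i)
  rw [Module.End.mem_maxGenEigenspace] at hw
  simpa using hw

/-- Factorization of `q` through `p` by a homogeneous map: a linear factor `s` is extended from
`range p` to `W`, then composed on `grW i` with a projection
onto `grW (i - e)`. -/
theorem exists_homogeneous_factor {F V W : Type} [Field F] [AddCommGroup V] [Module F V]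
    [AddCommGroup W] [Module F W]
    (grV : ℤ → Submodule F V) (grW : ℤ → Submodule F W)
    (hV : ⨆ i, grV i = ⊤) (hW : DirectSum.IsInternal grW)
    (p q : V →ₗ[F] W) (e : ℤ)
    (hp : ∀ i, (grV i).map p ≤ grW i)
    (hq : ∀ i, (grV i).map q ≤ grW (i - e))
    (hker : LinearMap.ker p ≤ LinearMap.ker q) :
    ∃ r : W →ₗ[F] W, (∀ i, (grW i).map r ≤ grW (i - e)) ∧ r ∘ₗ p = q := by
  obtain ⟨s, hs⟩ : ∃ s : W →ₗ[F] W, s ∘ₗ p = q := by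
    obtain ⟨s, hs⟩ := LinearMap.exists_extend
      ((LinearMap.ker p).liftQ q hker ∘ₗ p.quotKerEquivRange.symm.toLinearMap)
    refine ⟨s, LinearMap.ext fun v => ?_⟩
    have h1 := LinearMap.congr_fun hs (p.quotKerEquivRange ((LinearMap.ker p).mkQ v))
    simpa using h1
  -- Any projection onto `grW j` serves here; it need not vanish on the other graded pieces.
  have hproj : ∀ j, ∃ π : W →ₗ[F] grW j, π ∘ₗ (grW j).subtype = LinearMap.id := fun j =>
    LinearMap.exists_leftInverse_of_injective _ (grW j).ker_subtype
  choose π hπ using hproj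
  let E := LinearEquiv.ofBijective (DirectSum.coeLinearMap grW) hW
  let r : W →ₗ[F] W := DirectSum.toModule F ℤ W
    (fun i => (grW (i - e)).subtype ∘ₗ π (i - e) ∘ₗ s ∘ₗ (grW i).subtype) ∘ₗ E.symm.toLinearMap
  have hr : ∀ i, ∀ w ∈ grW i, r w = π (i - e) (s w) := by
    intro i w hw
    have h1 : E.symm w = DirectSum.lof F ℤ (fun i => grW i) i ⟨w, hw⟩ := by
      rw [LinearEquiv.symm_apply_eq]
      exact (DirectSum.coeLinearMap_lof grW i ⟨w, hw⟩).symm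
    simp only [r, LinearMap.comp_apply, LinearEquiv.coe_coe, h1, DirectSum.toModule_lof,
      Submodule.subtype_apply]
  refine ⟨r, fun i => ?_, ?_⟩
  · rintro _ ⟨w, hw, rfl⟩
    rw [hr i w hw]
    exact Subtype.property _
  · have hle : ⨆ i, grV i ≤ LinearMap.eqLocus (r ∘ₗ p) q := by
      refine iSup_le fun i v hv => ?_
      rw [LinearMap.mem_eqLocus, LinearMap.comp_apply,
        hr i (p v) (hp i (Submodule.mem_map_of_mem hv)), show s (p v) = q v from LinearMap.congr_fun hs v]
      exact congrArg Subtype.val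
        (LinearMap.congr_fun (hπ (i - e)) ⟨q v, hq i (Submodule.mem_map_of_mem hv)⟩)
    exact LinearMap.ext fun v => hle (hV ▸ Submodule.mem_top)


/-- Let `V`, `W` be ℤ-graded vector spaces over a field `F` (internal gradings), with `W`
bounded below.  Let `p : V → W` be homogeneous of degree `0` and `q : V → W` homogeneous
of degree `-e` for some integer `e ≥ 1`, with `ker p ⊆ ker q`.  Then (1) there is an
automorphism `g = id + r` of `W`, with `r` homogeneous of degree `-e`, such that
`p + q = g ∘ p`; and (2) consequently `ker (p + q) = ker p` and the cokernel of `p + q`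
is isomorphic to the cokernel of `p`. -/
theorem stmt_6 {F V W : Type} [Field F] [AddCommGroup V] [Module F V]
    [AddCommGroup W] [Module F W]
    (grV : ℤ → Submodule F V) (grW : ℤ → Submodule F W)
    (hV : DirectSum.IsInternal grV) (hW : DirectSum.IsInternal grW)
    (N₀ : ℤ) (hbdd : ∀ i, i < N₀ → grW i = ⊥)
    (p q : V →ₗ[F] W) (e : ℤ) (he : 1 ≤ e)
    (hp : ∀ i, (grV i).map p ≤ grW i)
    (hq : ∀ i, (grV i).map q ≤ grW (i - e))
    (hker : LinearMap.ker p ≤ LinearMap.ker q) :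
    (∃ r : W →ₗ[F] W, (∀ i, (grW i).map r ≤ grW (i - e)) ∧
      Function.Bijective ((LinearMap.id + r : W →ₗ[F] W)) ∧
      p + q = (LinearMap.id + r : W →ₗ[F] W) ∘ₗ p) ∧
    LinearMap.ker (p + q) = LinearMap.ker p ∧
    Nonempty ((W ⧸ LinearMap.range (p + q)) ≃ₗ[F] (W ⧸ LinearMap.range p)) := by
  obtain ⟨r, hr, hrp⟩ :=
    exists_homogeneous_factor grV grW hV.submodule_iSup_eq_top hW p q e hp hq hker
  have hbij := bijective_id_add_of_locally_nilpotent r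
    (exists_pow_apply_eq_zero grW hW.submodule_iSup_eq_top N₀ hbdd e he r hr)
  have hpq : p + q = (LinearMap.id + r : W →ₗ[F] W) ∘ₗ p := by
    rw [LinearMap.add_comp, LinearMap.id_comp, hrp]
  refine ⟨⟨r, hr, hbij, hpq⟩, ?_, ⟨?_⟩⟩
  · rw [hpq, LinearMap.ker_comp, LinearMap.ker_eq_bot.mpr hbij.1, Submodule.comap_bot]
  · refine (Submodule.Quotient.equiv _ _ (LinearEquiv.ofBijective _ hbij) ?_).symm
    rw [hpq, LinearMap.range_comp]
    rfl
end

section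
/- Duality for reductions: Let C be a filtered complex over a field with finite-dimensional underlying space and filtration 0 = C_0 ⊆ ⋯ ⊆ C_m = C. Equip the dual complex C^* (the degreewise linear dual with the transpose differential) with the annihilator filtration (C^*)_i = Ann(C_{m−i}) = {φ ∈ C^* : φ vanishes on C_{m−i}}; this makes C^* a filtered complex whose filtered quotients satisfy (C^*)^i ≅ (C^{m+1−i})^*. If ι : C' → C is a reduction of C with filtration-preserving homotopy inverse π : C → C', then the dual map π^* : (C')^* → C^* exhibits (C')^*, with its annihilator filtration, as a reduction of C^*. In short, the dual of the reduction is the reduction of the dual. -/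
/-!
Transposing reverses composition and inclusions of annihilators, so every part of the structure of
a filtered complex, a chain map, or a filtered homotopy passes to the dual. Since the transpose of
`id - π ∘ ι = d' ∘ H + H ∘ d'` is `id - ι^* ∘ π^* = H^* ∘ d'^* + d'^* ∘ H^*`, the map `π^*` is a
filtered homotopy equivalence with inverse `ι^*`.

Two points need an argument. Finite-dimensionality is used to see that the dual grading is an
internal direct sum (`isInternal_dualGr`); for `C'` it is deduced from that of the filtered
quotients of `C'`, which are homologies of those of `C`. The identification of the filtered
quotients of the dual of `C'` with the homology of those of the dual of `C` is obtained from the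
homotopy equivalence: a homotopy equivalence from a complex with zero differential identifies that
complex with the homology of the target (`nonempty_equiv_Hgy`).
-/

open LinearMap

/-- `(gr', d', filt', ι)` is a reduction of the filtered complex `(gr, d, filt)`. -/
def IsReduction {F M M' : Type} [Field F] [AddCommGroup M] [Module F M]
    [AddCommGroup M'] [Module F M']
    (gr : ℤ → Submodule F M) (d : M →ₗ[F] M) (m : ℕ) (filt : ℕ → Submodule F M)
    (hsub : ∀ p, (filt p).map d ≤ filt p)
    (gr' : ℤ → Submodule F M') (d' : M' →ₗ[F] M') (filt' : ℕ → Submodule F M')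
    (ι : M' →ₗ[F] M) : Prop :=
  IsCx gr' d' ∧ IsFilt d' m filt' ∧ (∀ p, (filt' p).map d' ≤ filt' (p - 1)) ∧
  IsFiltHtpyEquiv gr' d' filt' gr d filt ι ∧
  ∀ p, 1 ≤ p → p ≤ m → Nonempty (FQuot filt' p ≃ₗ[F] Hgy (fQuot d filt filt hsub p))

/-- The grading of the degreewise linear dual of a graded vector space: the degree-`n`
part consists of the functionals vanishing on every `gr i` with `i ≠ -n`. -/
def dualGr {F M : Type} [Field F] [AddCommGroup M] [Module F M]
    (gr : ℤ → Submodule F M) (n : ℤ) : Submodule F (Module.Dual F M) :=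
  ⨅ (i : ℤ) (_ : i ≠ -n), (gr i).dualAnnihilator

/-- The annihilator filtration on the dual: `(C^*)_p = Ann(C_{m-p})`. -/
def dualFilt {F M : Type} [Field F] [AddCommGroup M] [Module F M]
    (m : ℕ) (filt : ℕ → Submodule F M) (p : ℕ) : Submodule F (Module.Dual F M) :=
  (filt (m - p)).dualAnnihilator

section Grading

variable {F M N : Type} [Field F] [AddCommGroup M] [Module F M] [AddCommGroup N] [Module F N]

theorem mem_dualGr {gr : ℤ → Submodule F M} {n : ℤ} {φ : Module.Dual F M} :
    φ ∈ dualGr gr n ↔ ∀ i, i ≠ -n → ∀ x ∈ gr i, φ x = 0 := by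
  simp [dualGr, Submodule.mem_iInf, Submodule.mem_dualAnnihilator]

theorem mem_dualFilt {m : ℕ} {filt : ℕ → Submodule F M} {p : ℕ} {φ : Module.Dual F M} :
    φ ∈ dualFilt m filt p ↔ ∀ x ∈ filt (m - p), φ x = 0 := by
  simp [dualFilt, Submodule.mem_dualAnnihilator]

/-- The transpose of a map of degree `k` has degree `k` for the dual gradings, because the
degree `n` part of the dual is the dual of the degree `-n` part. -/
theorem map_dualGr_le {grM : ℤ → Submodule F M} {grN : ℤ → Submodule F N} {f : M →ₗ[F] N}
    (k : ℤ) (hf : ∀ i, (grM i).map f ≤ grN (i + k)) (n : ℤ) :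
    (dualGr grN n).map f.dualMap ≤ dualGr grM (n + k) := by
  rintro _ ⟨φ, hφ, rfl⟩
  refine mem_dualGr.2 fun i hi x hx => ?_
  exact mem_dualGr.1 hφ (i + k) (by omega) (f x) (hf i ⟨x, hx, rfl⟩)

theorem map_dualFilt_le {m : ℕ} {filtM : ℕ → Submodule F M} {filtN : ℕ → Submodule F N}
    {f : M →ₗ[F] N} (hf : ∀ p, (filtM p).map f ≤ filtN p) (p : ℕ) :
    (dualFilt m filtN p).map f.dualMap ≤ dualFilt m filtM p := by
  rintro _ ⟨φ, hφ, rfl⟩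
  exact mem_dualFilt.2 fun x hx => mem_dualFilt.1 hφ (f x) (hf _ ⟨x, hx, rfl⟩)

theorem isInternal_dualGr [FiniteDimensional F M] {gr : ℤ → Submodule F M}
    (h : DirectSum.IsInternal gr) : DirectSum.IsInternal (dualGr gr) := by
  rw [DirectSum.isInternal_submodule_iff_iSupIndep_and_iSup_eq_top]
  constructor
  · intro n
    rw [Submodule.disjoint_def]
    intro φ h₁ h₂
    -- Every graded piece of degree other than `n` annihilates `gr (-n)`.
    have h₃ : (⨆ (j : ℤ) (_ : j ≠ n), dualGr gr j) ≤ (gr (-n)).dualAnnihilator := by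
      refine iSup₂_le fun j hj ψ hψ => ?_
      rw [Submodule.mem_dualAnnihilator]
      exact mem_dualGr.1 hψ (-n) (by omega)
    have h₄ : (⨆ i, gr i) ≤ LinearMap.ker φ := by
      refine iSup_le fun i x hx => ?_
      by_cases hi : i = -n
      · subst hi
        exact (Submodule.mem_dualAnnihilator _).1 (h₃ h₂) x hx
      · exact mem_dualGr.1 h₁ i hi x hx
    rw [h.submodule_iSup_eq_top, top_le_iff] at h₄
    exact LinearMap.ker_eq_top.1 h₄
  · -- By finite-dimensionality it suffices that no nonzero vector is killed by every homogeneous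
    -- functional; the functionals `φ ∘ (projection to gr i)` already separate vectors.
    have key : (⨆ n, dualGr gr n).dualCoannihilator = ⊥ := by
      rw [eq_bot_iff]
      intro x hx
      rw [Submodule.mem_dualCoannihilator] at hx
      let e := LinearEquiv.ofBijective (DirectSum.coeLinearMap gr) h
      have hz : e.symm x = 0 := by
        refine DFinsupp.ext fun i => ?_
        refine (Module.forall_dual_apply_eq_zero_iff F (e.symm x i)).1 fun φ => ?_
        refine hx (φ ∘ₗ DirectSum.component F ℤ (fun i => gr i) i ∘ₗ e.symm.toLinearMap) ?_
        refine Submodule.mem_iSup_of_mem (-i) (mem_dualGr.2 fun j hj y hy => ?_)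
        have h0 : (e.symm y) i = 0 :=
          h.ofBijective_coeLinearMap_of_mem_ne (by omega) hy
        change φ ((e.symm y) i) = 0
        rw [h0, map_zero]
      simpa using hz
    rw [← Subspace.dualCoannihilator_dualAnnihilator_eq (W := ⨆ n, dualGr gr n), key,
      Submodule.dualAnnihilator_bot]

theorem isCx_dual [FiniteDimensional F M] {gr : ℤ → Submodule F M} {d : M →ₗ[F] M}
    (h : IsCx gr d) : IsCx (dualGr gr) d.dualMap :=
  ⟨isInternal_dualGr h.1, map_dualGr_le (-1) h.2.1, by
    rw [LinearMap.dualMap_comp_dualMap, h.2.2]; ext; simp⟩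

theorem isChainMap_dual {grM : ℤ → Submodule F M} {grN : ℤ → Submodule F N} {d : M →ₗ[F] M}
    {e : N →ₗ[F] N} {f : M →ₗ[F] N} (h : IsChainMap grM d grN e f) :
    IsChainMap (dualGr grN) e.dualMap (dualGr grM) d.dualMap f.dualMap :=
  ⟨fun i => by simpa using map_dualGr_le 0 (by simpa using h.1) i, by
    rw [LinearMap.dualMap_comp_dualMap, LinearMap.dualMap_comp_dualMap, h.2]⟩

theorem isHomotopy_dual {gr : ℤ → Submodule F M} {d H : M →ₗ[F] M} {f : M →ₗ[F] N}
    {g : N →ₗ[F] M} (h : IsHomotopy gr d gr d LinearMap.id (g ∘ₗ f) H) :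
    IsHomotopy (dualGr gr) d.dualMap (dualGr gr) d.dualMap LinearMap.id
      (f.dualMap ∘ₗ g.dualMap) H.dualMap := by
  refine ⟨map_dualGr_le 1 h.1, ?_⟩
  ext φ x
  have := congrArg φ (LinearMap.congr_fun h.2 x)
  simpa [add_comm] using this

theorem isFilt_dual {d : M →ₗ[F] M} {m : ℕ} {filt : ℕ → Submodule F M} (h : IsFilt d m filt) :
    IsFilt d.dualMap m (dualFilt m filt) where
  bot := by simp [dualFilt, h.top]
  top := by simp [dualFilt, h.bot]
  mono := fun p q hpq => Submodule.dualAnnihilator_anti (h.mono (by omega))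
  subcx := map_dualFilt_le h.subcx

theorem finrank_FQuot_add [FiniteDimensional F M] {filt : ℕ → Submodule F M} (h : Monotone filt)
    (p : ℕ) : Module.finrank F (FQuot filt p) + Module.finrank F (filt (p - 1)) =
      Module.finrank F (filt p) := by
  have h₁ := Submodule.finrank_quotient_add_finrank (fSub filt p)
  have h₂ : Module.finrank F (fSub filt p) = Module.finrank F (filt (p - 1)) :=
    (Submodule.comapSubtypeEquivOfLe (h (Nat.sub_le p 1))).finrank_eq
  rw [← h₂]
  exact h₁

theorem nonempty_FQuot_dual [FiniteDimensional F M] {d : M →ₗ[F] M} {m : ℕ}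
    {filt : ℕ → Submodule F M} (h : IsFilt d m filt) {p : ℕ} (hp : 1 ≤ p) (hpm : p ≤ m) :
    Nonempty (FQuot (dualFilt m filt) p ≃ₗ[F] Module.Dual F (FQuot filt (m + 1 - p))) := by
  refine FiniteDimensional.nonempty_linearEquiv_of_finrank_eq ?_
  rw [Subspace.dual_finrank_eq]
  have h₁ := finrank_FQuot_add (isFilt_dual h).mono p
  have h₂ := finrank_FQuot_add h.mono (m + 1 - p)
  have h₃ : Module.finrank F (filt (m - p)) + Module.finrank F (dualFilt m filt p) = _ :=
    Subspace.finrank_add_finrank_dualAnnihilator_eq (filt (m - p))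
  have h₄ : Module.finrank F (filt (m - (p - 1))) +
      Module.finrank F (dualFilt m filt (p - 1)) = _ :=
    Subspace.finrank_add_finrank_dualAnnihilator_eq (filt (m - (p - 1)))
  rw [show m + 1 - p - 1 = m - p by omega] at h₂
  rw [show m - (p - 1) = m + 1 - p by omega] at h₄
  omega

/-- A filtration step is an extension of a filtered quotient by the previous step, so finitely many
finite-dimensional quotients make the whole space finite-dimensional. -/
theorem finiteDimensional_of_FQuot {d : M →ₗ[F] M} {m : ℕ} {filt : ℕ → Submodule F M}
    (h : IsFilt d m filt)
    (hq : ∀ p, 1 ≤ p → p ≤ m → FiniteDimensional F (FQuot filt p)) : FiniteDimensional F M := by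
  have key : ∀ p, p ≤ m → FiniteDimensional F (filt p) := by
    intro p
    induction p with
    | zero => intro _; rw [h.bot]; infer_instance
    | succ p ih =>
      intro hp
      have := ih (by omega)
      have := hq (p + 1) (by omega) hp
      have : FiniteDimensional F (fSub filt (p + 1)) :=
        Module.Finite.equiv (Submodule.comapSubtypeEquivOfLe (h.mono (Nat.le_succ p))).symm
      exact Module.Finite.of_submodule_quotient (fSub filt (p + 1))
  have := key m le_rfl
  rw [h.top] at this
  exact Module.Finite.equiv (Submodule.topEquiv (R := F) (M := M))

/-- A homotopy equivalence `f` from a space with zero differential to `(V, e)`, with homotopy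
inverse `j`, identifies that space with the homology of `(V, e)`: here `j ∘ f = id` on the nose,
since a homotopy between endomorphisms of a space with zero differential forces equality. -/
theorem nonempty_equiv_Hgy {U V : Type} [AddCommGroup U] [Module F U] [AddCommGroup V]
    [Module F V] {e K : V →ₗ[F] V} {f : U →ₗ[F] V} {j : V →ₗ[F] U}
    (hef : ∀ x, e (f x) = 0) (hje : ∀ y, j (e y) = 0) (hjf : ∀ x, j (f x) = x)
    (hK : ∀ y, y - f (j y) = e (K y) + K (e y)) : Nonempty (U ≃ₗ[F] Hgy e) := by
  let g : U →ₗ[F] Hgy e := ((LinearMap.range e).comap (LinearMap.ker e).subtype).mkQ ∘ₗ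
    f.codRestrict (LinearMap.ker e) hef
  refine ⟨LinearEquiv.ofBijective g ⟨?_, ?_⟩⟩
  · rw [injective_iff_map_eq_zero]
    intro x hx
    obtain ⟨y, hy⟩ : f x ∈ LinearMap.range e :=
      (Submodule.Quotient.mk_eq_zero ((LinearMap.range e).comap (LinearMap.ker e).subtype)).1 hx
    rw [← hjf x, ← hy, hje]
  · intro z
    obtain ⟨⟨y, hy⟩, rfl⟩ :=
      Submodule.mkQ_surjective ((LinearMap.range e).comap (LinearMap.ker e).subtype) z
    refine ⟨j y, (Submodule.Quotient.eq
      ((LinearMap.range e).comap (LinearMap.ker e).subtype)).2 ?_⟩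
    have hy' : e y = 0 := hy
    have := hK y
    rw [hy', map_zero, add_zero] at this
    refine ⟨-K y, ?_⟩
    change e (-K y) = f (j y) - y
    rw [map_neg, ← this, neg_sub]

/-- For a filtered homotopy equivalence from a complex whose filtered quotients have zero
differential, those quotients are the homologies of the filtered quotients of the target. -/
theorem nonempty_FQuot_equiv_Hgy {e K : M →ₗ[F] M} {e' K' : N →ₗ[F] N}
    {filt : ℕ → Submodule F M} {filt' : ℕ → Submodule F N} {f : N →ₗ[F] M} {j : M →ₗ[F] N}
    (he : ∀ p, (filt p).map e ≤ filt p) (he' : ∀ p, (filt' p).map e' ≤ filt' (p - 1))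
    (hf : ∀ p, (filt' p).map f ≤ filt p) (hj : ∀ p, (filt p).map j ≤ filt' p)
    (hK : ∀ p, (filt p).map K ≤ filt p) (hK' : ∀ p, (filt' p).map K' ≤ filt' p)
    (hfe : f ∘ₗ e' = e ∘ₗ f) (hje : j ∘ₗ e = e' ∘ₗ j)
    (h₁ : LinearMap.id - j ∘ₗ f = e' ∘ₗ K' + K' ∘ₗ e')
    (h₂ : LinearMap.id - f ∘ₗ j = e ∘ₗ K + K ∘ₗ e) (p : ℕ) :
    Nonempty (FQuot filt' p ≃ₗ[F] Hgy (fQuot e filt filt he p)) := by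
  refine nonempty_equiv_Hgy (K := fQuot K filt filt hK p) (f := fQuot f filt' filt hf p)
    (j := fQuot j filt filt' hj p) ?_ ?_ ?_ ?_
  · intro x
    obtain ⟨⟨x, hx⟩, rfl⟩ := Submodule.mkQ_surjective _ x
    refine (Submodule.Quotient.mk_eq_zero _).2 ?_
    change e (f x) ∈ filt (p - 1)
    rw [← LinearMap.comp_apply, ← hfe]
    exact hf _ ⟨_, he' p ⟨x, hx, rfl⟩, rfl⟩
  · intro x
    obtain ⟨⟨x, hx⟩, rfl⟩ := Submodule.mkQ_surjective _ x
    refine (Submodule.Quotient.mk_eq_zero _).2 ?_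
    change j (e x) ∈ filt' (p - 1)
    rw [← LinearMap.comp_apply, hje]
    exact he' p ⟨_, hj p ⟨x, hx, rfl⟩, rfl⟩
  · intro x
    obtain ⟨⟨x, hx⟩, rfl⟩ := Submodule.mkQ_surjective _ x
    refine Eq.symm ((Submodule.Quotient.eq _).2 ?_)
    change x - j (f x) ∈ filt' (p - 1)
    have := LinearMap.congr_fun h₁ x
    simp only [LinearMap.sub_apply, LinearMap.id_apply, LinearMap.comp_apply,
      LinearMap.add_apply] at this
    rw [this]
    exact add_mem (he' p ⟨_, hK' p ⟨x, hx, rfl⟩, rfl⟩) (hK' _ ⟨_, he' p ⟨x, hx, rfl⟩, rfl⟩)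
  · intro x
    obtain ⟨⟨x, hx⟩, rfl⟩ := Submodule.mkQ_surjective _ x
    refine congrArg (fSub filt p).mkQ (Subtype.ext ?_)
    exact LinearMap.congr_fun h₂ x

end Grading

/-- **Duality for reductions.**  Let `C` be a finite-dimensional filtered complex over a
field.  The dual complex `C^*` (degreewise linear dual with the transpose differential),
equipped with the annihilator filtration, is a filtered complex whose filtered quotients
satisfy `(C^*)^p ≅ (C^{m+1-p})^*`; and if `ι : C' → C` is a reduction of `C` with
filtration-preserving homotopy inverse `π : C → C'`, then the dual map
`π^* : (C')^* → C^*` exhibits `(C')^*`, with its annihilator filtration, as a reduction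
of `C^*`: the dual of the reduction is the reduction of the dual. -/
theorem stmt_8 {F M M' : Type} [Field F] [AddCommGroup M] [Module F M]
    [FiniteDimensional F M] [AddCommGroup M'] [Module F M']
    (gr : ℤ → Submodule F M) (d : M →ₗ[F] M) (hC : IsCx gr d)
    (m : ℕ) (filt : ℕ → Submodule F M) (hF : IsFilt d m filt)
    (gr' : ℤ → Submodule F M') (d' : M' →ₗ[F] M') (filt' : ℕ → Submodule F M')
    (ι : M' →ₗ[F] M)
    (hred : IsReduction gr d m filt hF.subcx gr' d' filt' ι)
    (π : M →ₗ[F] M')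
    (hπcm : IsChainMap gr d gr' d' π)
    (hπf : ∀ p, (filt p).map π ≤ filt' p)
    (hH1 : ∃ H : M' →ₗ[F] M', IsHomotopy gr' d' gr' d' LinearMap.id (π ∘ₗ ι) H ∧
      ∀ p, (filt' p).map H ≤ filt' p)
    (hH2 : ∃ H : M →ₗ[F] M, IsHomotopy gr d gr d LinearMap.id (ι ∘ₗ π) H ∧
      ∀ p, (filt p).map H ≤ filt p) :
    IsCx (dualGr gr) d.dualMap ∧
    IsFilt d.dualMap m (dualFilt m filt) ∧
    (∀ p, 1 ≤ p → p ≤ m →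
      Nonempty (FQuot (dualFilt m filt) p ≃ₗ[F] Module.Dual F (FQuot filt (m + 1 - p)))) ∧
    ∃ hsub : ∀ p, ((dualFilt m filt) p).map d.dualMap ≤ (dualFilt m filt) p,
      IsReduction (dualGr gr) d.dualMap m (dualFilt m filt) hsub
        (dualGr gr') d'.dualMap (dualFilt m filt') π.dualMap := by
  obtain ⟨hC', hF', hd', ⟨hιcm, hιf, -⟩, hiso⟩ := hred
  obtain ⟨H, hH, hHf⟩ := hH1
  obtain ⟨K, hK, hKf⟩ := hH2
  have : FiniteDimensional F M' := finiteDimensional_of_FQuot hF' fun p hp hpm =>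
    Module.Finite.equiv (hiso p hp hpm).some.symm
  have hFd := isFilt_dual hF
  have hdd : ∀ p, (dualFilt m filt' p).map d'.dualMap ≤ dualFilt m filt' (p - 1) := by
    intro p
    rintro _ ⟨φ, hφ, rfl⟩
    refine mem_dualFilt.2 fun x hx => ?_
    rcases Nat.eq_zero_or_pos p with rfl | hp
    · exact mem_dualFilt.1 hφ _ (hF'.subcx _ ⟨x, hx, rfl⟩)
    · -- For `p > m` both truncated differences `m - p` and `m - (p - 1) - 1` are zero.
      have := hd' _ ⟨x, hx, rfl⟩
      rw [show m - (p - 1) - 1 = m - p by omega] at this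
      exact mem_dualFilt.1 hφ _ this
  have hπd := isChainMap_dual hπcm
  have hιd := isChainMap_dual hιcm
  have hHd := isHomotopy_dual hH
  have hKd := isHomotopy_dual hK
  refine ⟨isCx_dual hC, hFd, fun p hp hpm => nonempty_FQuot_dual hF hp hpm, hFd.subcx,
    isCx_dual hC', isFilt_dual hF', hdd, ⟨hπd, map_dualFilt_le hπf, ι.dualMap, H.dualMap,
      K.dualMap, hιd, map_dualFilt_le hιf, hHd, map_dualFilt_le hHf, hKd,
      map_dualFilt_le hKf⟩, fun p _ _ => ?_⟩
  exact nonempty_FQuot_equiv_Hgy hFd.subcx hdd (map_dualFilt_le hπf) (map_dualFilt_le hιf)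
    (map_dualFilt_le hKf) (map_dualFilt_le hHf) hπd.2 hιd.2 hHd.2 hKd.2 p
end
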